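/- arXiv:2411.03681 — 2 statements merged into one kernel-verified Lean document; each statement's English description precedes it below -/
import Mathlib

section
/- Let p > 2 be a prime and a, b integers with p not dividing b² − 4a². Then modulo p: (i) for all natural numbers N, n₀ with n₀ < p − 2, 2a²·M^{a,b}_{N·p + n₀} ≡ T^{a,b}_N · (2a²·M^{a,b}_{n₀}); (ii) for all natural numbers N, k and m ≤ p−2, with n = N·p^{k+2} + m·p^{k+1} + p^{k+1} − 2 (base-p digits: those of N, then m, then k digits p−1, then p−2), 2a²·M^{a,b}_n ≡ T^{a,b}_N · ( b·T^{a,b}_m·(T^{a,b}_{p−1})^{k+1} − T^{a,b}_{m+1} ); (iii) for all natural numbers N, k and m ≤ p−2, with n = N·p^{k+2} + m·p^{k+1} + p^{k+1} − 1 (base-p digits: those of N, then m, then k digits p−1, then p−1) and ℓ = p−2−m, (b²−4a²)^{(p−1)/2} · 2a²·M^{a,b}_n ≡ (b²−4a²)^{m+1} · T^{a,b}_N · ( b·T^{a,b}_ℓ − (T^{a,b}_{p−1})^{k+1}·T^{a,b}_{ℓ+1} ) (this last congruence is the paper's 2a²M_n ≡ (b²−4a²)^{m+1−(p−1)/2}·T_N·(bT_ℓ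 − (T_{p−1})^{k+1}T_{ℓ+1}) with the invertible factor (b²−4a²)^{(p−1)/2} cleared to avoid negative exponents). -/
open Polynomial

/-- The generalized central trinomial coefficient `T^{a,b}_n`:
the coefficient of `X^n` in `(a + bX + aX^2)^n`. -/
noncomputable def genTrinomial (a b : ℤ) (n : ℕ) : ℤ :=
  ((C a + C b * X + C a * X ^ 2) ^ n).coeff n

/-- The generalized Motzkin number `M^{a,b}_n`:
the coefficient of `X^n` in `(a + bX + aX^2)^n * (1 - X^2)`. -/
noncomputable def genMotzkin (a b : ℤ) (n : ℕ) : ℤ :=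
  (((C a + C b * X + C a * X ^ 2) ^ n) * (1 - X ^ 2)).coeff n

/-! The generating function of the central trinomial coefficients is `(1 - 2bx + Dx²)^(-1/2)` with
`D` the discriminant. Modulo an odd prime `p` one has `-1/2 = (p - 1)/2`, so for `n < p` the
coefficient `T_n` is the `n`-th coefficient of the polynomial `(1 - 2bx + Dx²)^((p - 1)/2)`. This
polynomial is self-reciprocal up to powers of `D`, which relates `T_{p-1-n}` to `T_n`. The Frobenius
endomorphism gives `T_{Np+r} = T_N T_r` for `r < p`, and `2a²M_n` is a linear combination of `T_n`,
`T_{n+1}`, `T_{n+2}`, so its value is read off the base `p` digits of these three indices. -/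

lemma coeff_X_mul_derivative {R : Type*} [Semiring R] (f : R[X]) (n : ℕ) :
    (X * derivative f).coeff n = n * f.coeff n := by
  cases n with
  | zero => simp
  | succ n => rw [coeff_X_mul, coeff_derivative, ← Nat.cast_succ, Nat.cast_comm]

lemma coeff_expand_mul_of_natDegree_lt {R : Type*} [CommSemiring R] {q r : ℕ} (hr : r < q)
    (f g : R[X]) (hg : g.natDegree < q + r) (N : ℕ) :
    (expand R q f * g).coeff (N * q + r) = f.coeff N * g.coeff r := by
  have hq : 0 < q := by lia
  rw [coeff_mul, Finset.sum_eq_single (N * q, r), coeff_expand_mul hq]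
  · rintro ⟨i, j⟩ hij hne
    rw [Finset.HasAntidiagonal.mem_antidiagonal] at hij
    dsimp only at hij ⊢
    by_cases hi : q ∣ i
    · obtain ⟨m, rfl⟩ := hi
      rcases lt_trichotomy m N with hm | rfl | hm
      · rw [coeff_eq_zero_of_natDegree_lt (p := g), mul_zero]
        nlinarith
      · exact absurd (Prod.ext (mul_comm _ _) (by dsimp only; lia)) hne
      · nlinarith
    · rw [coeff_expand hq, if_neg hi, zero_mul]
  · simp

section Quadratic

variable {R : Type*} [CommRing R] (a b c : R)

/-- The quadratic polynomial `a + bX + cX²`, the base of the powers defining central trinomial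
coefficients. -/
noncomputable def quadraticPoly : R[X] := C a + C b * X + C c * X ^ 2

/-- The central trinomial coefficient `T_n` of `a + bX + cX²`, i.e. the coefficient of `X^n` in its
`n`-th power. It extends `genTrinomial` to arbitrary coefficient rings, so that one can compute in
`ZMod p`, and to possibly different outer coefficients. -/
noncomputable def centralTrinomial (n : ℕ) : R := (quadraticPoly a b c ^ n).coeff n

lemma natDegree_quadraticPoly_pow_le (n : ℕ) : (quadraticPoly a b c ^ n).natDegree ≤ 2 * n := by
  have h : (quadraticPoly a b c).natDegree ≤ 2 := by
    unfold quadraticPoly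
    compute_degree
  simpa only [mul_comm] using natDegree_pow_le_of_le n h

lemma derivative_quadraticPoly : derivative (quadraticPoly a b c) = C b + 2 * C c * X := by
  simp only [quadraticPoly, derivative_add, derivative_C, derivative_C_mul, derivative_X,
    derivative_X_sq, C_ofNat]
  ring

lemma reflect_quadraticPoly_pow (n : ℕ) :
    reflect (2 * n) (quadraticPoly a b c ^ n) = quadraticPoly c b a ^ n := by
  have h : reflect 2 (quadraticPoly a b c) = quadraticPoly c b a := by
    have hX : reflect 2 (X : R[X]) = X := by simpa using reflect_monomial (R := R) 2 1
    simp only [quadraticPoly, reflect_add, reflect_C, reflect_C_mul, hX, reflect_monomial,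
      revAt_le le_rfl, Nat.sub_self, pow_zero]
    ring
  induction n with
  | zero => simp
  | succ n ih =>
    have hdeg : (quadraticPoly a b c).natDegree ≤ 2 := by
      simpa using natDegree_quadraticPoly_pow_le a b c 1
    rw [pow_succ, mul_add_one, reflect_mul _ _ (natDegree_quadraticPoly_pow_le a b c n) hdeg,
      ih, h, pow_succ]

lemma coeff_quadraticPoly_pow_swap {n i : ℕ} (hi : i ≤ 2 * n) :
    (quadraticPoly c b a ^ n).coeff i = (quadraticPoly a b c ^ n).coeff (2 * n - i) := by
  rw [← reflect_quadraticPoly_pow, coeff_reflect, revAt_le hi]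

lemma coeff_quadraticPoly_pow_mul_X_pow (n j : ℕ) :
    (quadraticPoly a b c ^ n * X ^ j).coeff n = (quadraticPoly c b a ^ n).coeff (n + j) := by
  rw [coeff_mul_X_pow']
  split_ifs with hj
  · rw [coeff_quadraticPoly_pow_swap c b a (by lia)]
    congr 1
    lia
  · refine (coeff_eq_zero_of_natDegree_lt ?_).symm
    have := natDegree_quadraticPoly_pow_le c b a n
    lia

lemma pow_mul_coeff_quadraticPoly_one_pow (d : R) {h r : ℕ} (hr : r ≤ 2 * h) :
    d ^ r * (quadraticPoly 1 b d ^ h).coeff (2 * h - r) =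
      d ^ h * (quadraticPoly 1 b d ^ h).coeff r := by
  have hscale : (quadraticPoly d b 1).comp (C d * X) = C d * quadraticPoly 1 b d := by
    simp only [quadraticPoly, add_comp, mul_comp, C_comp, X_comp, pow_comp, one_comp, C_1]
    ring
  rw [← coeff_quadraticPoly_pow_swap 1 b d hr, mul_comm, ← comp_C_mul_X_coeff, pow_comp, hscale,
    mul_pow, ← C_pow, coeff_C_mul]

lemma quadraticPoly_mul_derivative_pow (n : ℕ) :
    quadraticPoly a b c * derivative (quadraticPoly a b c ^ n) =
      C (n : R) * (C b + 2 * C c * X) * quadraticPoly a b c ^ n := by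
  cases n with
  | zero => simp
  | succ n =>
    rw [derivative_pow_succ, derivative_quadraticPoly, Nat.cast_succ]
    ring

lemma coeff_quadraticPoly_pow_one (n : ℕ) :
    a * (quadraticPoly a b c ^ n).coeff 1 = n * b * (quadraticPoly a b c ^ n).coeff 0 := by
  simpa [mul_coeff_zero, coeff_derivative, quadraticPoly] using
    congrArg (coeff · 0) (quadraticPoly_mul_derivative_pow a b c n)

lemma coeff_quadraticPoly_pow_add_two (n k : ℕ) :
    a * (k + 2) * (quadraticPoly a b c ^ n).coeff (k + 2) =
      b * (n - (k + 1)) * (quadraticPoly a b c ^ n).coeff (k + 1) +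
        c * (2 * n - k) * (quadraticPoly a b c ^ n).coeff k := by
  have hode := quadraticPoly_mul_derivative_pow a b c n
  set q := quadraticPoly a b c ^ n
  have hode' : C a * (X * derivative q) + C b * (X * derivative q * X) +
      C c * (X * derivative q * X ^ 2) = C (n * b) * (q * X) + C (2 * n * c) * (q * X ^ 2) := by
    rw [quadraticPoly] at hode
    simp only [C_mul, C_ofNat]
    linear_combination X * hode
  have hcoeff := congrArg (coeff · (k + 2)) hode'
  simp only [coeff_add, coeff_C_mul, coeff_mul_X, coeff_mul_X_pow, coeff_X_mul_derivative] at hcoeff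
  push_cast at hcoeff
  linear_combination hcoeff

lemma centralTrinomial_zero : centralTrinomial a b c 0 = 1 := by
  simp [centralTrinomial]

lemma centralTrinomial_one : centralTrinomial a b c 1 = b := by
  simp [centralTrinomial, quadraticPoly, coeff_C, coeff_X_pow]

-- Compare the coefficients of `X ^ (k + 2)`: those of `X * F'` and `(k + 2) * F` agree, where
-- `F = (cX² - a) * (a + bX + cX²) ^ (k + 1)`.
lemma centralTrinomial_add_two (k : ℕ) :
    (k + 2) * centralTrinomial a b c (k + 2) =
      (2 * k + 3) * b * centralTrinomial a b c (k + 1) -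
        (k + 1) * discrim a b c * centralTrinomial a b c k := by
  set P := quadraticPoly a b c with hP
  set F : R[X] := (C c * X ^ 2 - C a) * P ^ (k + 1) with hF
  have hderiv : X * derivative F = C (k + 2 : R) * F + C (k + 2 : R) * P ^ (k + 2) -
      C ((2 * k + 3) * b) * (P ^ (k + 1) * X) + C ((k + 1) * discrim a b c) * (P ^ k * X ^ 2) := by
    rw [hF, derivative_mul, derivative_pow_succ, hP, derivative_quadraticPoly]
    simp only [quadraticPoly, discrim, derivative_sub, derivative_C_mul, derivative_X_sq,
      derivative_C, C_add, C_sub, C_mul, C_pow, C_ofNat, C_1]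
    ring
  have hcoeff := congrArg (coeff · (k + 2)) hderiv
  simp only [coeff_add, coeff_sub, coeff_C_mul, coeff_mul_X, coeff_mul_X_pow,
    coeff_X_mul_derivative] at hcoeff
  push_cast at hcoeff
  unfold centralTrinomial
  linear_combination -hcoeff

lemma map_quadraticPoly {S : Type*} [CommRing S] (φ : R →+* S) :
    (quadraticPoly a b c).map φ = quadraticPoly (φ a) (φ b) (φ c) := by
  simp only [quadraticPoly, Polynomial.map_add, Polynomial.map_mul, Polynomial.map_pow, map_C,
    map_X]

lemma map_centralTrinomial {S : Type*} [CommRing S] (φ : R →+* S) (n : ℕ) :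
    φ (centralTrinomial a b c n) = centralTrinomial (φ a) (φ b) (φ c) n := by
  rw [centralTrinomial, ← coeff_map, Polynomial.map_pow, map_quadraticPoly, centralTrinomial]

end Quadratic

section CharP

variable {R : Type*} [CommRing R] {p : ℕ} [hp : Fact p.Prime] [CharP R p] (a b c : R)

lemma centralTrinomial_mul_add {r : ℕ} (hr : r < p) (N : ℕ) :
    centralTrinomial a b c (N * p + r) =
      centralTrinomial a b c N ^ p * centralTrinomial a b c r := by
  have hdeg := natDegree_quadraticPoly_pow_le a b c r
  rw [centralTrinomial, pow_add, pow_mul, ← map_frobenius_expand p, map_expand,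
    coeff_expand_mul_of_natDegree_lt hr _ _ (by lia), coeff_map, frobenius_def, centralTrinomial,
    centralTrinomial]

-- Both sides satisfy the recurrence of `centralTrinomial_add_two`, since `(p - 1) / 2 = -1 / 2`.
lemma centralTrinomial_eq_coeff_pow (hp2 : p ≠ 2) {n : ℕ} (hn : n < p) :
    centralTrinomial a b c n =
      (quadraticPoly 1 (-2 * b) (discrim a b c) ^ ((p - 1) / 2)).coeff n := by
  set D := discrim a b c with hD
  set h := (p - 1) / 2 with hh
  have hhalf : 2 * (h : R) = -1 := by
    have hsucc : 2 * h + 1 = p := by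
      rw [hh, Nat.two_mul_div_two_of_even (hp.out.even_sub_one hp2),
        Nat.sub_add_cancel hp.out.one_le]
    have hcast : ((2 * h + 1 : ℕ) : R) = 0 := by rw [hsucc, CharP.cast_eq_zero]
    push_cast at hcast
    linear_combination hcast
  have hzero : (quadraticPoly 1 (-2 * b) D ^ h).coeff 0 = 1 := by
    simp [quadraticPoly, coeff_zero_eq_eval_zero]
  induction n using Nat.twoStepInduction with
  | zero => rw [centralTrinomial_zero, hzero]
  | one =>
    have hone := coeff_quadraticPoly_pow_one 1 (-2 * b) D h
    rw [hzero] at hone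
    rw [centralTrinomial_one]
    linear_combination -hone + b * hhalf
  | more k ih₀ ih₁ =>
    have hunit : IsUnit ((k + 2 : ℕ) : R) :=
      (CharP.isUnit_natCast_iff hp.out).2 (Nat.not_dvd_of_pos_of_lt (by lia) hn)
    refine hunit.mul_left_cancel ?_
    have hrec := coeff_quadraticPoly_pow_add_two 1 (-2 * b) D h k
    push_cast
    rw [centralTrinomial_add_two, ← hD, ih₀ (by lia), ih₁ (by lia)]
    linear_combination -hrec + (b * (quadraticPoly 1 (-2 * b) D ^ h).coeff (k + 1) -
      D * (quadraticPoly 1 (-2 * b) D ^ h).coeff k) * hhalf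

lemma discrim_pow_mul_centralTrinomial (hp2 : p ≠ 2) {r : ℕ} (hr : r < p) :
    discrim a b c ^ r * centralTrinomial a b c (p - 1 - r) =
      discrim a b c ^ ((p - 1) / 2) * centralTrinomial a b c r := by
  have htwice : 2 * ((p - 1) / 2) = p - 1 :=
    Nat.two_mul_div_two_of_even (hp.out.even_sub_one hp2)
  rw [centralTrinomial_eq_coeff_pow a b c hp2 hr, centralTrinomial_eq_coeff_pow a b c hp2 (by lia),
    ← pow_mul_coeff_quadraticPoly_one_pow _ _ (by lia), htwice]

lemma discrim_mul_centralTrinomial_sub_two :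
    discrim a b c * centralTrinomial a b c (p - 2) = b * centralTrinomial a b c (p - 1) := by
  obtain ⟨k, hk⟩ := Nat.exists_eq_add_of_le' hp.out.two_le
  have hcast : (k : R) + 2 = 0 := by
    have h := CharP.cast_eq_zero R p
    rw [hk] at h
    exact_mod_cast h
  rw [show p - 2 = k by lia, show p - 1 = k + 1 by lia]
  linear_combination (centralTrinomial a b c (k + 2) - 2 * b * centralTrinomial a b c (k + 1) +
    discrim a b c * centralTrinomial a b c k) * hcast - centralTrinomial_add_two a b c k

end CharP

section ZMod

variable {p : ℕ} [hp : Fact p.Prime]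

lemma centralTrinomial_zmod_mul_add (a b c : ZMod p) {r : ℕ} (hr : r < p) (N : ℕ) :
    centralTrinomial a b c (N * p + r) = centralTrinomial a b c N * centralTrinomial a b c r := by
  rw [centralTrinomial_mul_add a b c hr, ZMod.pow_card]

lemma centralTrinomial_zmod_mul_pow (a b c : ZMod p) (N k : ℕ) :
    centralTrinomial a b c (N * p ^ k) = centralTrinomial a b c N := by
  induction k with
  | zero => simp
  | succ k ih =>
    simpa [pow_succ, mul_assoc, centralTrinomial_zero, ih] using
      centralTrinomial_zmod_mul_add a b c hp.out.pos (N * p ^ k)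

lemma centralTrinomial_zmod_mul_pow_add_pow_sub_one (a b c : ZMod p) (N k : ℕ) :
    centralTrinomial a b c (N * p ^ k + (p ^ k - 1)) =
      centralTrinomial a b c N * centralTrinomial a b c (p - 1) ^ k := by
  have hpos := hp.out.pos
  induction k with
  | zero => simp
  | succ k ih =>
    have hdigits : N * p ^ (k + 1) + (p ^ (k + 1) - 1) =
        (N * p ^ k + (p ^ k - 1)) * p + (p - 1) := by
      zify [Nat.one_le_pow k p hpos, Nat.one_le_pow (k + 1) p hpos, Nat.one_le_of_lt hpos]
      ring
    rw [hdigits, centralTrinomial_zmod_mul_add a b c (Nat.sub_one_lt_of_lt hpos), ih, pow_succ,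
      mul_assoc]

end ZMod

section Motzkin

lemma two_mul_sq_mul_genMotzkin (a b : ℤ) (n : ℕ) :
    2 * a ^ 2 * genMotzkin a b n =
      2 * b * genTrinomial a b (n + 1) - genTrinomial a b (n + 2) -
        discrim a b a * genTrinomial a b n := by
  set q := quadraticPoly a b a ^ n with hq
  have hsymm (j : ℕ) : (q * X ^ j).coeff n = q.coeff (n + j) :=
    coeff_quadraticPoly_pow_mul_X_pow a b a n j
  have hzero : genTrinomial a b n = q.coeff n := rfl
  have hone : genTrinomial a b (n + 1) = 2 * a * q.coeff (n + 1) + b * q.coeff n := by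
    have hexp : quadraticPoly a b a ^ (n + 1) =
        C a * q + C b * (q * X) + C a * (q * X ^ 1 * X) := by
      rw [pow_succ, ← hq, quadraticPoly]
      ring
    change (quadraticPoly a b a ^ (n + 1)).coeff (n + 1) = _
    rw [hexp]
    simp only [coeff_add, coeff_C_mul, coeff_mul_X, hsymm]
    ring
  have htwo : genTrinomial a b (n + 2) = 2 * a ^ 2 * q.coeff (n + 2) +
      4 * a * b * q.coeff (n + 1) + (b ^ 2 + 2 * a ^ 2) * q.coeff n := by
    have hexp : quadraticPoly a b a ^ (n + 2) = C (a ^ 2) * q + C (2 * a * b) * (q * X) +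
        C (b ^ 2 + 2 * a ^ 2) * (q * X ^ 2) + C (2 * a * b) * (q * X ^ 1 * X ^ 2) +
        C (a ^ 2) * (q * X ^ 2 * X ^ 2) := by
      rw [pow_add, ← hq, quadraticPoly]
      simp only [C_add, C_mul, C_pow, C_ofNat]
      ring
    change (quadraticPoly a b a ^ (n + 2)).coeff (n + 2) = _
    rw [hexp]
    simp only [coeff_add, coeff_C_mul, coeff_mul_X, coeff_mul_X_pow, hsymm]
    ring
  have hmotzkin : genMotzkin a b n = q.coeff n - q.coeff (n + 2) := by
    rw [← hsymm, ← coeff_sub, ← mul_one_sub]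
    rfl
  rw [hmotzkin, hzero, hone, htwo, discrim]
  ring

lemma intCast_genTrinomial (R : Type*) [CommRing R] (a b : ℤ) (n : ℕ) :
    (genTrinomial a b n : R) = centralTrinomial (a : R) b a n :=
  map_centralTrinomial a b a (Int.castRingHom R) n

lemma two_mul_sq_mul_intCast_genMotzkin (R : Type*) [CommRing R] (a b : ℤ) (n : ℕ) :
    2 * (a : R) ^ 2 * genMotzkin a b n =
      2 * b * centralTrinomial (a : R) b a (n + 1) - centralTrinomial (a : R) b a (n + 2) -
        discrim (a : R) b a * centralTrinomial (a : R) b a n := by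
  simpa [intCast_genTrinomial, discrim] using
    congrArg (Int.cast (R := R)) (two_mul_sq_mul_genMotzkin a b n)

variable {p : ℕ} [hp : Fact p.Prime] (a b : ℤ)

lemma two_mul_sq_mul_intCast_genMotzkin_mul_add {r : ℕ} (hr : r + 2 < p) (N : ℕ) :
    2 * (a : ZMod p) ^ 2 * genMotzkin a b (N * p + r) =
      centralTrinomial (a : ZMod p) b a N * (2 * a ^ 2 * genMotzkin a b r) := by
  simp only [two_mul_sq_mul_intCast_genMotzkin, add_assoc]
  rw [centralTrinomial_zmod_mul_add _ _ _ hr,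
    centralTrinomial_zmod_mul_add _ _ _ (by lia : r + 1 < p),
    centralTrinomial_zmod_mul_add _ _ _ (by lia : r < p)]
  ring

lemma two_mul_sq_mul_intCast_genMotzkin_mul_pow_add_pow_sub_two (N k : ℕ) :
    2 * (a : ZMod p) ^ 2 * genMotzkin a b (N * p ^ (k + 1) + (p ^ (k + 1) - 2)) =
      b * centralTrinomial (a : ZMod p) b a N *
          centralTrinomial (a : ZMod p) b a (p - 1) ^ (k + 1) -
        centralTrinomial (a : ZMod p) b a (N + 1) := by
  have htwo : 2 ≤ p ^ (k + 1) := hp.out.two_le.trans (Nat.le_self_pow k.succ_ne_zero p)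
  set n := N * p ^ (k + 1) + (p ^ (k + 1) - 2) with hn
  have hn₀ : n = (N * p ^ k + (p ^ k - 1)) * p + (p - 2) := by
    zify [hn, htwo, hp.out.two_le, Nat.one_le_pow k p hp.out.pos]
    ring
  have hn₁ : n + 1 = N * p ^ (k + 1) + (p ^ (k + 1) - 1) := by lia
  have hn₂ : n + 2 = (N + 1) * p ^ (k + 1) := by
    rw [add_one_mul]
    lia
  rw [two_mul_sq_mul_intCast_genMotzkin, hn₁, hn₂, hn₀,
    centralTrinomial_zmod_mul_pow_add_pow_sub_one, centralTrinomial_zmod_mul_pow,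
    centralTrinomial_zmod_mul_add _ _ _ (Nat.sub_lt hp.out.pos two_pos),
    centralTrinomial_zmod_mul_pow_add_pow_sub_one]
  linear_combination (-centralTrinomial (a : ZMod p) b a N *
    centralTrinomial (a : ZMod p) b a (p - 1) ^ k) *
      discrim_mul_centralTrinomial_sub_two (a : ZMod p) b a

lemma two_mul_sq_mul_intCast_genMotzkin_mul_pow_add_pow_sub_one (N k : ℕ) :
    2 * (a : ZMod p) ^ 2 * genMotzkin a b (N * p ^ (k + 1) + (p ^ (k + 1) - 1)) =
      b * centralTrinomial (a : ZMod p) b a (N + 1) -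
        discrim (a : ZMod p) b a * centralTrinomial (a : ZMod p) b a N *
          centralTrinomial (a : ZMod p) b a (p - 1) ^ (k + 1) := by
  have hpos : 0 < p ^ (k + 1) := pow_pos hp.out.pos _
  set n := N * p ^ (k + 1) + (p ^ (k + 1) - 1) with hn
  have hn₁ : n + 1 = (N + 1) * p ^ (k + 1) := by
    rw [add_one_mul]
    lia
  have hn₂ : n + 2 = (N + 1) * p ^ k * p + 1 := by
    rw [mul_assoc, ← pow_succ, ← hn₁]
  rw [two_mul_sq_mul_intCast_genMotzkin, hn₂, hn₁, hn,
    centralTrinomial_zmod_mul_add _ _ _ hp.out.one_lt, centralTrinomial_zmod_mul_pow,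
    centralTrinomial_zmod_mul_pow, centralTrinomial_zmod_mul_pow_add_pow_sub_one,
    centralTrinomial_one]
  ring

end Motzkin

theorem stmt10_general (p : ℕ) (hp : p.Prime) (hp2 : 2 < p) (a b : ℤ) :
    (∀ N n₀ : ℕ, n₀ < p - 2 →
      2 * a ^ 2 * genMotzkin a b (N * p + n₀) ≡
        genTrinomial a b N * (2 * a ^ 2 * genMotzkin a b n₀) [ZMOD (p : ℤ)]) ∧
    (∀ N k m : ℕ, m ≤ p - 2 →
      2 * a ^ 2 * genMotzkin a b (N * p ^ (k + 2) + m * p ^ (k + 1) + (p ^ (k + 1) - 2)) ≡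
        genTrinomial a b N *
          (b * genTrinomial a b m * (genTrinomial a b (p - 1)) ^ (k + 1)
            - genTrinomial a b (m + 1)) [ZMOD (p : ℤ)]) ∧
    (∀ N k m : ℕ, m ≤ p - 2 →
      (b ^ 2 - 4 * a ^ 2) ^ ((p - 1) / 2) *
          (2 * a ^ 2 * genMotzkin a b (N * p ^ (k + 2) + m * p ^ (k + 1) + (p ^ (k + 1) - 1))) ≡
        (b ^ 2 - 4 * a ^ 2) ^ (m + 1) * genTrinomial a b N *
          (b * genTrinomial a b (p - 2 - m)
            - (genTrinomial a b (p - 1)) ^ (k + 1) * genTrinomial a b (p - 2 - m + 1))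
        [ZMOD (p : ℤ)]) := by
  have : Fact p.Prime := ⟨hp⟩
  simp only [← ZMod.intCast_eq_intCast_iff, Int.cast_mul, Int.cast_sub, Int.cast_pow,
    Int.cast_ofNat, intCast_genTrinomial]
  have hdigits (N k m : ℕ) :
      N * p ^ (k + 2) + m * p ^ (k + 1) = (N * p + m) * p ^ (k + 1) := by ring
  have hdiscrim : (b : ZMod p) ^ 2 - 4 * (a : ZMod p) ^ 2 = discrim (a : ZMod p) b a := by
    rw [discrim]
    ring
  simp only [hdigits, hdiscrim]
  refine ⟨fun N n₀ hn₀ ↦ ?_, fun N k m hm ↦ ?_, fun N k m hm ↦ ?_⟩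
  · exact two_mul_sq_mul_intCast_genMotzkin_mul_add a b (by lia) N
  · rw [two_mul_sq_mul_intCast_genMotzkin_mul_pow_add_pow_sub_two, add_assoc,
      centralTrinomial_zmod_mul_add _ _ _ (by lia), centralTrinomial_zmod_mul_add _ _ _ (by lia)]
    ring
  · have hrefl := discrim_pow_mul_centralTrinomial (a : ZMod p) b a hp2.ne' (r := m) (by lia)
    have hrefl' := discrim_pow_mul_centralTrinomial (a : ZMod p) b a hp2.ne' (r := m + 1) (by lia)
    rw [show p - 1 - m = p - 2 - m + 1 by lia] at hrefl
    rw [show p - 1 - (m + 1) = p - 2 - m by lia] at hrefl'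
    rw [two_mul_sq_mul_intCast_genMotzkin_mul_pow_add_pow_sub_one, add_assoc,
      centralTrinomial_zmod_mul_add _ _ _ (by lia), centralTrinomial_zmod_mul_add _ _ _ (by lia)]
    linear_combination centralTrinomial (a : ZMod p) b a N *
      (discrim (a : ZMod p) b a * centralTrinomial (a : ZMod p) b a (p - 1) ^ (k + 1) * hrefl -
        b * hrefl')

theorem stmt10 (p : ℕ) (hp : p.Prime) (hp2 : 2 < p) (a b : ℤ)
    (hd : ¬ (p : ℤ) ∣ (b ^ 2 - 4 * a ^ 2)) :
    -- (i)
    (∀ N n₀ : ℕ, n₀ < p - 2 →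
      2 * a ^ 2 * genMotzkin a b (N * p + n₀) ≡
        genTrinomial a b N * (2 * a ^ 2 * genMotzkin a b n₀) [ZMOD (p : ℤ)]) ∧
    -- (ii)
    (∀ N k m : ℕ, m ≤ p - 2 →
      2 * a ^ 2 * genMotzkin a b (N * p ^ (k + 2) + m * p ^ (k + 1) + (p ^ (k + 1) - 2)) ≡
        genTrinomial a b N *
          (b * genTrinomial a b m * (genTrinomial a b (p - 1)) ^ (k + 1)
            - genTrinomial a b (m + 1)) [ZMOD (p : ℤ)]) ∧
    -- (iii)
    (∀ N k m : ℕ, m ≤ p - 2 →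
      (b ^ 2 - 4 * a ^ 2) ^ ((p - 1) / 2) *
          (2 * a ^ 2 * genMotzkin a b (N * p ^ (k + 2) + m * p ^ (k + 1) + (p ^ (k + 1) - 1))) ≡
        (b ^ 2 - 4 * a ^ 2) ^ (m + 1) * genTrinomial a b N *
          (b * genTrinomial a b (p - 2 - m)
            - (genTrinomial a b (p - 1)) ^ (k + 1) * genTrinomial a b (p - 2 - m + 1))
        [ZMOD (p : ℤ)]) :=
  stmt10_general p hp hp2 a b
end

section
/- Let p > 2 be a prime and a, b integers with p ∤ a, assume p does not divide T^{a,b}_n for any n < p, and assume that the residues {T^{a,b}_n mod p : n < p} generate the multiplicative group (ℤ/pℤ)^×. Then for every k with 1 ≤ k ≤ p−1, the natural density of {n ∈ ℕ : M^{a,b}_n ≡ k (mod p)} exists and equals (1 − D₀)/(p−1), where D₀ is the natural density of {n ∈ ℕ : p ∣ M^{a,b}_n} (which exists). -/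
open Polynomial Filter

/-
Over a field with `q` elements `P ^ q = expand q P`, so the coefficient of `X ^ (q m + r)` in
`P ^ (q m + r) Q` is that of `X ^ m` in `P ^ m L`, where only the two coefficients of `P ^ r Q` at
exponents `r` and `r + q` enter the linear polynomial `L`. For `Q = 1` this is the Lucas congruence
`T (q m + r) = T m * T r`. Applying a multiplicative character `χ` to these coefficients for all
`L` at once gives a finite-dimensional sequence `F` whose sums over blocks of `q` terms satisfy
`blockSum q F m = H m + A (F m)` with `‖A‖ < q` and `H` proportional to `χ (T m)`. Averages then
contract by the factor `‖A‖ / q`, so `F` has an asymptotic mean as soon as `χ (T m)` has one. If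
`χ (T r) ≠ 1` for some digit `r`, then `|∑_{r < q} χ (T r)| < q` because `χ (T 0) = 1`, and the same
contraction shows that `χ (T m)` has mean `0`. The generation hypothesis provides such an `r` for
every `χ ≠ 1`, and orthogonality of characters turns the vanishing means into equidistribution on
the nonzero residues.
-/

open scoped Topology

section BlockSum

/-- The sums of `F` over consecutive blocks of `q` indices: a recursion along base-`q` digits
becomes a linear relation between `F` and `blockSum q F`. -/
def blockSum {M : Type*} [AddCommMonoid M] (q : ℕ) (F : ℕ → M) (m : ℕ) : M :=
  ∑ r ∈ Finset.range q, F (q * m + r)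

lemma sum_range_mul_eq_sum_blockSum {M : Type*} [AddCommMonoid M] (q : ℕ) (F : ℕ → M) (k : ℕ) :
    ∑ n ∈ Finset.range (q * k), F n = ∑ m ∈ Finset.range k, blockSum q F m := by
  induction k with
  | zero => simp
  | succ k ih => rw [Finset.sum_range_succ, ← ih, mul_add_one, Finset.sum_range_add, blockSum]

end BlockSum

section CesaroMean

variable {E E' : Type*} [NormedAddCommGroup E] [NormedSpace ℝ E]
  [NormedAddCommGroup E'] [NormedSpace ℝ E']

/-- The average of the first `N` terms of a sequence, equal to `0` for `N = 0`. -/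
noncomputable def cesaroMean (F : ℕ → E) (N : ℕ) : E :=
  (N : ℝ)⁻¹ • ∑ n ∈ Finset.range N, F n

/-- The sequence `F` has asymptotic mean `e`: its averages `cesaroMean F N` converge to `e`. -/
def HasMean (F : ℕ → E) (e : E) : Prop :=
  Tendsto (cesaroMean F) atTop (𝓝 e)

lemma cesaroMean_add (F G : ℕ → E) (N : ℕ) :
    cesaroMean (fun n => F n + G n) N = cesaroMean F N + cesaroMean G N := by
  simp only [cesaroMean, Finset.sum_add_distrib, smul_add]

lemma cesaroMean_map (A : E →L[ℝ] E') (F : ℕ → E) (N : ℕ) :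
    cesaroMean (fun n => A (F n)) N = A (cesaroMean F N) := by
  simp only [cesaroMean, map_smul, map_sum]

lemma norm_cesaroMean_le {F : ℕ → E} {K : ℝ} (hF : ∀ n, ‖F n‖ ≤ K) (N : ℕ) :
    ‖cesaroMean F N‖ ≤ K := by
  have hK : 0 ≤ K := (norm_nonneg _).trans (hF 0)
  rw [cesaroMean, norm_smul, norm_inv, Real.norm_natCast]
  refine inv_mul_le_of_le_mul₀ (Nat.cast_nonneg N) hK ?_
  simpa using norm_sum_le_of_le (Finset.range N) fun n _ => hF n

lemma hasMean_const (e : E) : HasMean (fun _ => e) e := by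
  refine tendsto_const_nhds.congr' ?_
  filter_upwards [eventually_ne_atTop 0] with N hN
  rw [cesaroMean, Finset.sum_const, Finset.card_range, ← Nat.cast_smul_eq_nsmul ℝ,
    inv_smul_smul₀ (Nat.cast_ne_zero.2 hN)]

lemma HasMean.add {F G : ℕ → E} {e f : E} (hF : HasMean F e) (hG : HasMean G f) :
    HasMean (fun n => F n + G n) (e + f) :=
  (Tendsto.add hF hG).congr fun N => (cesaroMean_add F G N).symm

lemma HasMean.map {F : ℕ → E} {e : E} (hF : HasMean F e) (A : E →L[ℝ] E') :
    HasMean (fun n => A (F n)) (A e) :=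
  ((A.continuous.tendsto e).comp hF).congr fun N => (cesaroMean_map A F N).symm

lemma HasMean.sum {ι : Type*} {s : Finset ι} {F : ι → ℕ → E} {e : ι → E}
    (hF : ∀ i ∈ s, HasMean (F i) (e i)) :
    HasMean (fun n => ∑ i ∈ s, F i n) (∑ i ∈ s, e i) := by
  refine (tendsto_finsetSum s hF).congr fun N => ?_
  simp only [cesaroMean, ← Finset.smul_sum]
  rw [Finset.sum_comm]

lemma cesaroMean_sub_cesaroMean_blockSum (q : ℕ) (F : ℕ → E) (N : ℕ) :
    cesaroMean F N - (((N / q : ℕ) : ℝ) / N) • cesaroMean (blockSum q F) (N / q) =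
      (N : ℝ)⁻¹ • ∑ r ∈ Finset.range (N % q), F (q * (N / q) + r) := by
  have hsum : ∑ n ∈ Finset.range N, F n = ∑ m ∈ Finset.range (N / q), blockSum q F m +
      ∑ r ∈ Finset.range (N % q), F (q * (N / q) + r) := by
    rw [← sum_range_mul_eq_sum_blockSum, ← Finset.sum_range_add, Nat.div_add_mod]
  have hblocks : (((N / q : ℕ) : ℝ) / N) • cesaroMean (blockSum q F) (N / q) =
      (N : ℝ)⁻¹ • ∑ m ∈ Finset.range (N / q), blockSum q F m := by
    rcases eq_or_ne (N / q) 0 with h | h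
    · simp [h]
    · rw [cesaroMean, smul_smul]
      congr 1
      field_simp
  rw [hblocks, cesaroMean, hsum, smul_add, add_sub_cancel_left]

lemma tendsto_cesaroMean_sub_cesaroMean_blockSum {q : ℕ} (hq : 0 < q) {F : ℕ → E} {K : ℝ}
    (hF : ∀ n, ‖F n‖ ≤ K) :
    Tendsto (fun N : ℕ => cesaroMean F N -
      (((N / q : ℕ) : ℝ) / N) • cesaroMean (blockSum q F) (N / q)) atTop (𝓝 0) := by
  have hK : 0 ≤ K := (norm_nonneg _).trans (hF 0)
  refine squeeze_zero_norm (fun N => ?_) (tendsto_const_div_atTop_nhds_zero_nat (q * K))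
  rw [cesaroMean_sub_cesaroMean_blockSum, norm_smul, norm_inv, Real.norm_natCast,
    div_eq_inv_mul]
  gcongr
  calc ‖∑ r ∈ Finset.range (N % q), F (q * (N / q) + r)‖
      ≤ (N % q : ℕ) * K := by
        simpa using norm_sum_le_of_le (Finset.range (N % q)) fun r _ => hF (q * (N / q) + r)
    _ ≤ q * K := by
        gcongr
        exact (Nat.mod_lt N hq).le

lemma tendsto_zero_of_le_mul_comp_add {α : Type*} {l : Filter α} {φ : α → α} (hφ : Tendsto φ l l)
    {u ε : α → ℝ} {c K : ℝ} (hu₀ : ∀ x, 0 ≤ u x) (huK : ∀ x, u x ≤ K) (hc₀ : 0 ≤ c) (hc₁ : c < 1)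
    (hε : Tendsto ε l (𝓝 0)) (h : ∀ x, u x ≤ c * u (φ x) + ε x) : Tendsto u l (𝓝 0) := by
  have hpow : ∀ k : ℕ, ∀ δ > 0, ∀ᶠ x in l, u x ≤ c ^ k * K + δ := by
    intro k
    induction k with
    | zero => exact fun δ hδ => .of_forall fun x => by linarith [huK x]
    | succ k ih =>
      intro δ hδ
      filter_upwards [hφ.eventually (ih (δ / 2) (half_pos hδ)),
        hε.eventually_le_const (half_pos hδ)] with x hx hεx
      calc u x ≤ c * u (φ x) + ε x := h x
        _ ≤ c * (c ^ k * K + δ / 2) + δ / 2 := by gcongr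
        _ = c ^ (k + 1) * K + (c * (δ / 2) + δ / 2) := by ring
        _ ≤ c ^ (k + 1) * K + δ := by
          linarith [mul_le_of_le_one_left (half_pos hδ).le hc₁.le]
  have hgeom : Tendsto (fun k : ℕ => c ^ k * K) atTop (𝓝 0) := by
    simpa using (tendsto_pow_atTop_nhds_zero_of_lt_one hc₀ hc₁).mul_const K
  refine tendsto_order.2 ⟨fun a ha => .of_forall fun x => ha.trans_le (hu₀ x), fun a ha => ?_⟩
  obtain ⟨k, hk⟩ := (hgeom.eventually_lt_const (half_pos ha)).exists
  filter_upwards [hpow k (a / 4) (by positivity)] with x hx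
  linarith

lemma HasMean.zero_of_blockSum {q : ℕ} {F H : ℕ → E} {K : ℝ} {A : E →L[ℝ] E} (hA : ‖A‖ < q)
    (hF : ∀ n, ‖F n‖ ≤ K) (hH : HasMean H 0) (hblock : ∀ m, blockSum q F m = H m + A (F m)) :
    HasMean F 0 := by
  have hq : (0 : ℝ) < q := (norm_nonneg A).trans_lt hA
  have hdiv : Tendsto (· / q) atTop atTop := Nat.tendsto_div_const_atTop (Nat.cast_pos.1 hq).ne'
  have herror := (tendsto_cesaroMean_sub_cesaroMean_blockSum (Nat.cast_pos.1 hq) hF).norm.add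
    ((hH.comp hdiv).norm.const_mul (q : ℝ)⁻¹)
  simp only [norm_zero, mul_zero, add_zero] at herror
  refine tendsto_zero_iff_norm_tendsto_zero.2 <| tendsto_zero_of_le_mul_comp_add hdiv
    (c := ‖A‖ / q) (fun _ => norm_nonneg _) (norm_cesaroMean_le hF) (by positivity)
    ((div_lt_one hq).2 hA) herror fun N => ?_
  have hweight : ((N / q : ℕ) : ℝ) / N ≤ (q : ℝ)⁻¹ := by
    refine div_le_of_le_mul₀ (Nat.cast_nonneg N) (by positivity) ?_
    rw [inv_mul_eq_div]
    exact Nat.cast_div_le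
  have hmean : cesaroMean (blockSum q F) (N / q) =
      cesaroMean H (N / q) + A (cesaroMean F (N / q)) := by
    rw [← cesaroMean_map, ← cesaroMean_add, funext hblock]
  set w : ℝ := ((N / q : ℕ) : ℝ) / N
  set D : E := cesaroMean F N - w • cesaroMean (blockSum q F) (N / q) with hD
  calc ‖cesaroMean F N‖
      = ‖D + w • (cesaroMean H (N / q) + A (cesaroMean F (N / q)))‖ := by
        rw [hD, ← hmean, sub_add_cancel]
    _ ≤ ‖D‖ + w * (‖cesaroMean H (N / q)‖ + ‖A‖ * ‖cesaroMean F (N / q)‖) := by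
        refine norm_add_le_of_le le_rfl ?_
        rw [norm_smul, Real.norm_of_nonneg (by positivity)]
        gcongr
        exact norm_add_le_of_le le_rfl (A.le_opNorm _)
    _ ≤ ‖D‖ + (q : ℝ)⁻¹ * (‖cesaroMean H (N / q)‖ + ‖A‖ * ‖cesaroMean F (N / q)‖) := by gcongr
    _ = ‖A‖ / q * ‖cesaroMean F (N / q)‖ + (‖D‖ + (q : ℝ)⁻¹ * ‖cesaroMean H (N / q)‖) := by ring

lemma HasMean.of_blockSum {q : ℕ} {F H : ℕ → E} {K : ℝ} {A : E →L[ℝ] E} {η e : E} (hA : ‖A‖ < q)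
    (hF : ∀ n, ‖F n‖ ≤ K) (hH : HasMean H η) (hblock : ∀ m, blockSum q F m = H m + A (F m))
    (he : (q : ℝ) • e = η + A e) : HasMean F e := by
  have hcentred : HasMean (fun n => F n + -e) 0 := by
    refine HasMean.zero_of_blockSum (H := fun m => H m + -η) (K := K + ‖-e‖) hA
      (fun n => norm_add_le_of_le (hF n) le_rfl) (by simpa using hH.add (hasMean_const (-η)))
      fun m => ?_
    have hconst : blockSum q (fun n => F n + -e) m = blockSum q F m + -((q : ℝ) • e) := by
      simp [blockSum, Finset.sum_add_distrib, Nat.cast_smul_eq_nsmul]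
    rw [hconst, hblock, he, map_add, map_neg]
    abel
  simpa using hcentred.add (hasMean_const e)

lemma exists_smul_eq_add_map [CompleteSpace E] {q : ℝ} {A : E →L[ℝ] E} (hA : ‖A‖ < q) (v : E) :
    ∃ e, q • e = v + A e := by
  have hq : 0 < q := (norm_nonneg A).trans_lt hA
  have hsmall : ‖q⁻¹ • A‖ < 1 := by
    rw [norm_smul, norm_inv, Real.norm_of_nonneg hq.le, inv_mul_lt_one₀ hq]
    exact hA
  obtain ⟨B, hB⟩ := (isUnit_one_sub_of_norm_lt_one hsmall).exists_right_inv
  refine ⟨B (q⁻¹ • v), ?_⟩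
  have hfix : B (q⁻¹ • v) - q⁻¹ • A (B (q⁻¹ • v)) = q⁻¹ • v := DFunLike.congr_fun hB (q⁻¹ • v)
  rw [sub_eq_iff_eq_add, ← smul_add] at hfix
  rw [hfix, smul_inv_smul₀ hq.ne', ← hfix]

end CesaroMean

section Density

/-- The set `S` has natural density `d`. -/
def HasDensity (S : Set ℕ) (d : ℝ) : Prop :=
  HasMean (S.indicator (1 : ℕ → ℝ)) d

lemma hasDensity_setOf_iff {s : ℕ → Prop} [DecidablePred s] {d : ℝ} :
    HasDensity {n | s n} d ↔
      Tendsto (fun N : ℕ => (((Finset.range N).filter s).card : ℝ) / N) atTop (𝓝 d) := by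
  refine tendsto_congr fun N => ?_
  simp [cesaroMean, Set.indicator_apply, div_eq_inv_mul]

lemma HasMean.hasDensity_re {S : Set ℕ} {L : ℂ} (h : HasMean (S.indicator (1 : ℕ → ℂ)) L) :
    HasDensity S L.re := by
  refine (h.map Complex.reCLM).congr fun N => congrArg (cesaroMean · N) (funext fun n => ?_)
  by_cases hn : n ∈ S <;> simp [hn]

end Density

section DigitMultiplicative

lemma norm_sum_lt_card {ι E : Type*} [NormedAddCommGroup E] [NormedSpace ℝ E]
    [StrictConvexSpace ℝ E] {s : Finset ι} {f : ι → E} (hf : ∀ i ∈ s, ‖f i‖ ≤ 1) {i j : ι}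
    (hi : i ∈ s) (hj : j ∈ s) (hij : f i ≠ f j) : ‖∑ k ∈ s, f k‖ < s.card := by
  have hs : (0 : ℝ) < s.card := Nat.cast_pos.2 (Finset.card_pos.2 ⟨i, hi⟩)
  have hlt := norm_sum_lt_of_strictConvexSpace (w := fun _ => (s.card : ℝ)⁻¹)
    (fun _ _ => by positivity) (by simp [hs.ne']) hi hj hij (by positivity) (by positivity) hf
  rwa [← Finset.smul_sum, norm_smul, norm_inv, Real.norm_natCast, inv_mul_lt_one₀ hs] at hlt

lemma eq_one_of_digit_mul {M : Type*} [MulOneClass M] {q : ℕ} {f : ℕ → M}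
    (hq : 1 < q) (hmul : ∀ m, ∀ r < q, f (q * m + r) = f m * f r) (hdigit : ∀ r < q, f r = 1)
    (n : ℕ) : f n = 1 := by
  induction n using Nat.strong_induction_on with
  | _ n ih =>
    rcases lt_or_ge n q with hn | hn
    · exact hdigit n hn
    · have hmod : n % q < q := Nat.mod_lt n (by omega)
      rw [← Nat.div_add_mod n q, hmul _ _ hmod, hdigit _ hmod,
        ih (n / q) (Nat.div_lt_self (by omega) hq), one_mul]

lemma hasMean_zero_of_digit_mul {q : ℕ} {f : ℕ → ℂ} (hf : ∀ n, ‖f n‖ ≤ 1)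
    (hmul : ∀ m, ∀ r < q, f (q * m + r) = f m * f r) {r s : ℕ} (hr : r < q) (hs : s < q)
    (hrs : f r ≠ f s) : HasMean f 0 := by
  refine HasMean.zero_of_blockSum (q := q) (H := fun _ => 0)
    (A := ContinuousLinearMap.mul ℝ ℂ (∑ r ∈ Finset.range q, f r)) ?_ hf (hasMean_const 0)
    fun m => ?_
  · rw [ContinuousLinearMap.opNorm_mul_apply]
    simpa using norm_sum_lt_card (fun k _ => hf k) (Finset.mem_range.2 hr)
      (Finset.mem_range.2 hs) hrs
  · rw [zero_add, ContinuousLinearMap.mul_apply', Finset.sum_mul]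
    exact Finset.sum_congr rfl fun r hr => by rw [hmul m r (Finset.mem_range.1 hr), mul_comm]

end DigitMultiplicative

section MulChar

lemma mulChar_eq_one_of_closure_eq_top {M R : Type*} [CommMonoid M] [CommMonoidWithZero R]
    {s : Set Mˣ} (hs : Subgroup.closure s = ⊤) {χ : MulChar M R} (h : ∀ u ∈ s, χ u = 1) :
    χ = 1 := by
  have hunit : χ.toUnitHom = 1 := MonoidHom.eq_of_eqOn_dense hs fun u hu => by
    ext
    simpa using h u hu
  ext u
  simpa using congrArg Units.val (DFunLike.congr_fun hunit u)

lemma sum_mulChar_apply {M R : Type*} [CommMonoid M] [Finite M] [DecidableEq M] [CommRing R]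
    [IsDomain R] [HasEnoughRootsOfUnity R (Monoid.exponent Mˣ)] [Fintype (MulChar M R)] (a : M) :
    ∑ χ : MulChar M R, χ a = if a = 1 then (Nat.card Mˣ : R) else 0 := by
  split_ifs with ha
  · simp [ha, ← MulChar.card_eq_card_units_of_hasEnoughRootsOfUnity M R]
  · obtain ⟨ψ, hψ⟩ := MulChar.exists_apply_ne_one_of_hasEnoughRootsOfUnity M R ha
    refine eq_zero_of_mul_eq_self_left hψ ?_
    simp only [Finset.mul_sum, ← MulChar.mul_apply]
    exact Fintype.sum_bijective _ (Group.mulLeft_bijective ψ) _ _ fun _ => rfl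

lemma norm_mulChar_apply_le_one {M : Type*} [CommMonoid M] [Finite Mˣ] (χ : MulChar M ℂ)
    (x : M) : ‖χ x‖ ≤ 1 := by
  by_cases hx : IsUnit x
  · have hfin : IsOfFinOrder (χ x) :=
      χ.toMonoidHom.isOfFinOrder (Units.isOfFinOrder_val.2 (isOfFinOrder_of_finite hx.unit))
    exact hfin.norm_eq_one.le
  · simp [χ.map_nonunit hx]

variable {K : Type*} [CommGroupWithZero K]

lemma HasMean.hasDensity_eq_zero {f : ℕ → K} {μ : ℂ}
    (h : HasMean (fun n => (1 : MulChar K ℂ) (f n)) μ) :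
    HasDensity {n | f n = 0} (1 - μ.re) := by
  have hind : HasMean ({n | f n = 0}.indicator (1 : ℕ → ℂ)) (1 + -μ) := by
    refine ((hasMean_const (1 : ℂ)).add (h.map (-ContinuousLinearMap.id ℝ ℂ))).congr fun N =>
      congrArg (cesaroMean · N) (funext fun n => ?_)
    by_cases hn : f n = 0
    · simp [hn, MulChar.map_nonunit]
    · simp [hn, MulChar.one_apply (Ne.isUnit hn)]
  simpa [sub_eq_add_neg] using hind.hasDensity_re

lemma HasMean.hasDensity_eq_of_ne_zero [Finite K] {f : ℕ → K} {μ : ℂ}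
    (hone : HasMean (fun n => (1 : MulChar K ℂ) (f n)) μ)
    (hne : ∀ χ : MulChar K ℂ, χ ≠ 1 → HasMean (fun n => χ (f n)) 0) {k : K} (hk : k ≠ 0) :
    HasDensity {n | f n = k} (μ.re / (Nat.card K - 1)) := by
  classical
  have := Fintype.ofFinite (MulChar K ℂ)
  have hmean (χ : MulChar K ℂ) : HasMean (fun n => χ (f n)) (if χ = 1 then μ else 0) := by
    split_ifs with hχ
    · exact hχ ▸ hone
    · exact hne χ hχ
  have hcard : (Nat.card Kˣ : ℂ) = ((Nat.card K - 1 : ℝ) : ℂ) := by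
    rw [Nat.card_units, Nat.cast_sub Nat.card_pos]
    push_cast
    rfl
  have hind : HasMean ({n | f n = k}.indicator (1 : ℕ → ℂ)) ((Nat.card Kˣ : ℂ)⁻¹ * μ) := by
    convert (HasMean.sum (s := Finset.univ) fun χ _ =>
      (hmean χ).map (ContinuousLinearMap.mul ℝ ℂ (χ k⁻¹))).map
        (ContinuousLinearMap.mul ℝ ℂ (Nat.card Kˣ : ℂ)⁻¹) using 1
    · ext n
      simp only [ContinuousLinearMap.mul_apply', ← map_mul, sum_mulChar_apply,
        inv_mul_eq_one₀ hk, Set.indicator_apply, Set.mem_ofPred_eq, eq_comm (a := k)]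
      split_ifs <;> simp
    · simp [MulChar.one_apply (inv_ne_zero hk).isUnit]
  have hre : ((Nat.card Kˣ : ℂ)⁻¹ * μ).re = μ.re / (Nat.card K - 1) := by
    rw [hcard, ← Complex.ofReal_inv, Complex.re_ofReal_mul, div_eq_inv_mul]
  exact hre ▸ hind.hasDensity_re

end MulChar

section DiagCoeff

/-- The coefficient of `X ^ n` in `P ^ n * Q`. For `P = a + b X + a X ^ 2` it is the generalized
central trinomial coefficient if `Q = 1` and the generalized Motzkin number if `Q = 1 - X ^ 2`. -/
noncomputable def diagCoeff {R : Type*} [Semiring R] (P Q : R[X]) (n : ℕ) : R :=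
  (P ^ n * Q).coeff n

lemma intCast_genTrinomial_s14 {R : Type*} [Ring R] (a b : ℤ) (n : ℕ) :
    (genTrinomial a b n : R) = diagCoeff (C (a : R) + C (b : R) * X + C (a : R) * X ^ 2) 1 n := by
  rw [genTrinomial, ← eq_intCast (Int.castRingHom R), ← coeff_map]
  simp [diagCoeff]

lemma intCast_genMotzkin {R : Type*} [Ring R] (a b : ℤ) (n : ℕ) :
    (genMotzkin a b n : R) =
      diagCoeff (C (a : R) + C (b : R) * X + C (a : R) * X ^ 2) (1 - X ^ 2) n := by
  rw [genMotzkin, ← eq_intCast (Int.castRingHom R), ← coeff_map]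
  simp [diagCoeff]

lemma natDegree_pow_mul_le {R : Type*} [Semiring R] {P : R[X]} {d : ℕ} (hP : P.natDegree ≤ d)
    (Q : R[X]) (n : ℕ) : (P ^ n * Q).natDegree ≤ n * d + Q.natDegree := by
  grw [natDegree_mul_le, natDegree_pow_le_of_le n hP]

/- Multiplying by `X ^ (q - r)` moves the exponents `≡ r` modulo `q` to multiples of `q`, where
`contract q` reads them off. -/
lemma coeff_expand_mul_add {R : Type*} [CommSemiring R] {q r : ℕ} (hr : r < q) (A : R[X]) {G : R[X]}
    (hG : G.natDegree < r + 2 * q) (m : ℕ) :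
    (expand R q A * G).coeff (q * m + r) =
      (A * (C (G.coeff r) + C (G.coeff (r + q)) * X)).coeff m := by
  have hq : q ≠ 0 := by omega
  have hcontract : contract q (X ^ (q - r) * G) =
      (C (G.coeff r) + C (G.coeff (r + q)) * X) * X := by
    ext j
    rw [coeff_contract hq, coeff_X_pow_mul']
    rcases j with _ | _ | j
    · simp [(Nat.sub_pos_of_lt hr).ne']
    · simp [Nat.sub_sub_self hr.le]
    · have hindex : (j + 2) * q - (q - r) = r + (j + 1) * q := by
        rw [add_mul, add_mul]
        omega
      rw [if_pos ((Nat.sub_le q r).trans (Nat.le_mul_of_pos_left q (by omega))), hindex]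
      rcases j with _ | j
      · simp
      · rw [coeff_eq_zero_of_natDegree_lt (by nlinarith)]
        simp
  rw [← coeff_mul_X (p := A * _), mul_assoc, ← hcontract, mul_comm A, ← contract_mul_expand hq,
    coeff_contract hq, mul_assoc, coeff_X_pow_mul',
    if_pos ((Nat.sub_le q r).trans (Nat.le_mul_of_pos_left q m.succ_pos)), mul_comm G]
  congr 1
  have := mul_comm m q
  rw [add_one_mul]
  omega

variable {K : Type*} [Field K] [Finite K] {q : ℕ} {P : K[X]}

lemma diagCoeff_mul_add (hq : Nat.card K = q) (hP : P.natDegree ≤ 2) {Q : K[X]}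
    (hQ : Q.natDegree ≤ q) {r : ℕ} (hr : r < q) (m : ℕ) :
    diagCoeff P Q (q * m + r) =
      diagCoeff P (C ((P ^ r * Q).coeff r) + C ((P ^ r * Q).coeff (r + q)) * X) m := by
  have hdeg := natDegree_pow_mul_le hP Q r
  have hfrob : (P ^ m) ^ q = expand K q (P ^ m) := by
    have := Fintype.ofFinite K
    rw [← hq, Nat.card_eq_fintype_card, FiniteField.expand_card]
  rw [diagCoeff, pow_add, pow_mul', hfrob, mul_assoc, coeff_expand_mul_add hr _ (by omega),
    diagCoeff]

lemma diagCoeff_mul_add_of_add_natDegree_lt (hq : Nat.card K = q) (hP : P.natDegree ≤ 2)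
    {Q : K[X]} {r : ℕ} (hr : r + Q.natDegree < q) (m : ℕ) :
    diagCoeff P Q (q * m + r) = diagCoeff P 1 m * diagCoeff P Q r := by
  have hdeg := natDegree_pow_mul_le hP Q r
  rw [diagCoeff_mul_add hq hP (by omega) (by omega),
    coeff_eq_zero_of_natDegree_lt (n := r + q) (by omega)]
  simp [diagCoeff]

lemma hasMean_mulChar_diagCoeff_one_zero (hq : Nat.card K = q) (hP : P.natDegree ≤ 2)
    {χ : MulChar K ℂ} {r : ℕ} (hr : r < q) (hχ : χ (diagCoeff P 1 r) ≠ 1) :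
    HasMean (fun n => χ (diagCoeff P 1 n)) 0 := by
  refine hasMean_zero_of_digit_mul (q := q) (fun n => norm_mulChar_apply_le_one χ _)
    (fun m s hs => ?_) hr (hq ▸ Nat.card_pos) ?_
  · rw [diagCoeff_mul_add_of_add_natDegree_lt hq hP (by simpa using hs), map_mul]
  · simpa [diagCoeff] using hχ

lemma exists_hasMean_mulChar_diagCoeff_one (hq : Nat.card K = q) (hP : P.natDegree ≤ 2)
    (χ : MulChar K ℂ) :
    ∃ τ, HasMean (fun n => χ (diagCoeff P 1 n)) τ := by
  by_cases! h : ∃ r < q, χ (diagCoeff P 1 r) ≠ 1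
  · obtain ⟨r, hr, hχ⟩ := h
    exact ⟨0, hasMean_mulChar_diagCoeff_one_zero hq hP hr hχ⟩
  · refine ⟨1, ?_⟩
    rw [funext (eq_one_of_digit_mul (f := fun n => χ (diagCoeff P 1 n)) (hq ▸ Finite.one_lt_card)
      (fun m r hr => ?_) h)]
    · exact hasMean_const 1
    · rw [diagCoeff_mul_add_of_add_natDegree_lt hq hP (by simpa using hr), map_mul]

lemma exists_hasMean_mulChar_diagCoeff_linear (hq : Nat.card K = q) (hP : P.natDegree ≤ 2)
    {χ : MulChar K ℂ} {τ : ℂ} (hτ : HasMean (fun n => χ (diagCoeff P 1 n)) τ) :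
    ∃ v : K × K → ℂ,
      ∀ s, HasMean (fun n => χ (diagCoeff P (C s.1 + C s.2 * X) n)) (τ * v s) := by
  have := Fintype.ofFinite K
  have hcard : 1 < q := hq ▸ Finite.one_lt_card
  have hlinear (s : K × K) : (C s.1 + C s.2 * X).natDegree ≤ 1 := by
    rw [add_comm]
    exact natDegree_linear_le
  let F (n : ℕ) (s : K × K) : ℂ := χ (diagCoeff P (C s.1 + C s.2 * X) n)
  let next (s : K × K) : K × K :=
    ((P ^ (q - 1) * (C s.1 + C s.2 * X)).coeff (q - 1),
      (P ^ (q - 1) * (C s.1 + C s.2 * X)).coeff (q - 1 + q))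
  let A : (K × K → ℂ) →L[ℝ] K × K → ℂ := ContinuousLinearMap.pi fun s => .proj (next s)
  have hA : ‖A‖ < q := by
    refine (A.opNorm_le_bound zero_le_one fun v => ?_).trans_lt (Nat.one_lt_cast.2 hcard)
    rw [one_mul]
    exact (pi_norm_le_iff_of_nonneg (norm_nonneg v)).2 fun s => norm_le_pi_norm v (next s)
  let h : K × K → ℂ := ∑ r ∈ Finset.range (q - 1), F r
  have hblock (m : ℕ) : blockSum q F m = χ (diagCoeff P 1 m) • h + A (F m) := by
    obtain ⟨d, rfl⟩ : ∃ d, q = d + 1 := ⟨q - 1, by omega⟩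
    rw [blockSum, Finset.sum_range_succ, Finset.smul_sum]
    refine congrArg₂ (· + ·) (Finset.sum_congr rfl fun r hr => funext fun s => ?_)
      (funext fun s => congrArg χ
        (diagCoeff_mul_add hq hP ((hlinear s).trans hcard.le) d.lt_succ_self m))
    have hr := Finset.mem_range.1 hr
    have := hlinear s
    exact (congrArg χ (diagCoeff_mul_add_of_add_natDegree_lt hq hP (by omega) m)).trans
      (map_mul χ _ _)
  obtain ⟨v, hv⟩ := exists_smul_eq_add_map hA h
  have hfix : (q : ℝ) • (τ • v) = τ • h + A (τ • v) := by
    rw [smul_comm, hv, smul_add]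
    rfl
  have hmean : HasMean F (τ • v) :=
    HasMean.of_blockSum hA
      (fun n => (pi_norm_le_iff_of_nonneg zero_le_one).2 fun s => norm_mulChar_apply_le_one χ _)
      (hτ.map (((1 : ℂ →L[ℂ] ℂ).smulRight h).restrictScalars ℝ)) hblock hfix
  exact ⟨v, fun s => hmean.map (ContinuousLinearMap.proj s)⟩

lemma exists_hasMean_mulChar_diagCoeff (hq : Nat.card K = q) (hP : P.natDegree ≤ 2) {Q : K[X]}
    (hQ : Q.natDegree ≤ q) {χ : MulChar K ℂ} {τ : ℂ}
    (hτ : HasMean (fun n => χ (diagCoeff P 1 n)) τ) :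
    ∃ c, HasMean (fun n => χ (diagCoeff P Q n)) (τ * c) := by
  obtain ⟨v, hv⟩ := exists_hasMean_mulChar_diagCoeff_linear hq hP hτ
  let s (r : ℕ) : K × K := ((P ^ r * Q).coeff r, (P ^ r * Q).coeff (r + q))
  have hcard : 0 < q := hq ▸ Nat.card_pos
  refine ⟨(q : ℂ)⁻¹ * ∑ r ∈ Finset.range q, v (s r), ?_⟩
  refine HasMean.of_blockSum (A := 0) (by simpa using hcard)
    (fun n => norm_mulChar_apply_le_one χ _)
    (HasMean.sum (s := Finset.range q) fun r _ => hv (s r)) (fun m => ?_) ?_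
  · rw [zero_apply, add_zero]
    exact Finset.sum_congr rfl fun r hr =>
      congrArg χ (diagCoeff_mul_add hq hP hQ (Finset.mem_range.1 hr) m)
  · have hq₀ : (q : ℂ) ≠ 0 := Nat.cast_ne_zero.2 hcard.ne'
    rw [zero_apply, add_zero, ← Finset.mul_sum, mul_left_comm, Nat.cast_smul_eq_nsmul,
      nsmul_eq_mul, mul_inv_cancel_left₀ hq₀]

theorem stmt14_general (hq : Nat.card K = q) (hP : P.natDegree ≤ 2) {Q : K[X]}
    (hQ : Q.natDegree ≤ q)
    (hgen : Subgroup.closure {u : Kˣ | ∃ n < q, (u : K) = diagCoeff P 1 n} = ⊤) :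
    ∃ D₀, HasDensity {n | diagCoeff P Q n = 0} D₀ ∧
      ∀ k ≠ 0, HasDensity {n | diagCoeff P Q n = k} ((1 - D₀) / (q - 1)) := by
  obtain ⟨τ, hτ⟩ := exists_hasMean_mulChar_diagCoeff_one hq hP (1 : MulChar K ℂ)
  obtain ⟨c, hone⟩ := exists_hasMean_mulChar_diagCoeff hq hP hQ hτ
  have hne (χ : MulChar K ℂ) (hχ : χ ≠ 1) : HasMean (fun n => χ (diagCoeff P Q n)) 0 := by
    obtain ⟨r, hr, hχr⟩ : ∃ r < q, χ (diagCoeff P 1 r) ≠ 1 := by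
      contrapose! hχ
      exact mulChar_eq_one_of_closure_eq_top hgen fun u ⟨n, hn, hu⟩ => hu ▸ hχ n hn
    obtain ⟨c, hc⟩ :=
      exists_hasMean_mulChar_diagCoeff hq hP hQ (hasMean_mulChar_diagCoeff_one_zero hq hP hr hχr)
    rwa [zero_mul] at hc
  refine ⟨1 - (τ * c).re, hone.hasDensity_eq_zero, fun k hk => ?_⟩
  rw [sub_sub_cancel]
  exact hq ▸ hone.hasDensity_eq_of_ne_zero hne hk

end DiagCoeff

open scoped Classical in
theorem stmt14 (p : ℕ) (hp : p.Prime) (hp2 : 2 < p) (a b : ℤ) (ha : ¬ (p : ℤ) ∣ a)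
    (hT : ∀ n < p, ¬ (p : ℤ) ∣ genTrinomial a b n)
    (hgen : Subgroup.closure
      {u : (ZMod p)ˣ | ∃ n < p, (u : ZMod p) = ((genTrinomial a b n : ℤ) : ZMod p)} = ⊤) :
    ∃ D₀ : ℝ,
      Tendsto
        (fun N : ℕ =>
          (((Finset.range N).filter (fun n => (p : ℤ) ∣ genMotzkin a b n)).card : ℝ) / N)
        atTop (nhds D₀) ∧
      ∀ k : ℕ, 1 ≤ k → k ≤ p - 1 →
        Tendsto
          (fun N : ℕ =>
            (((Finset.range N).filter
              (fun n => genMotzkin a b n ≡ (k : ℤ) [ZMOD (p : ℤ)])).card : ℝ) / N)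
          atTop (nhds ((1 - D₀) / ((p : ℝ) - 1))) := by
  have := Fact.mk hp
  simp only [intCast_genTrinomial_s14] at hgen
  simp only [← hasDensity_setOf_iff, ← ZMod.intCast_zmod_eq_zero_iff_dvd,
    ← ZMod.intCast_eq_intCast_iff, intCast_genMotzkin, Int.cast_natCast]
  obtain ⟨D₀, hzero, hne⟩ := stmt14_general (Q := 1 - X ^ 2) (Nat.card_zmod p)
    (by compute_degree) (le_trans (by compute_degree) hp.two_le) hgen
  exact ⟨D₀, hzero, fun k h₁ h₂ => hne k fun hk =>
    Nat.not_dvd_of_pos_of_lt h₁ (by omega) ((ZMod.natCast_eq_zero_iff k p).1 hk)⟩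
end
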